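/- Let c ≥ 1, α ≥ 0, β ≥ α + 2, and let λ = (λ_1, …, λ_α, c^β, λ_{α+β+1}, …) be a partition of n with λ_{α+β+1} < c, and additionally c < λ_α when α > 0. Let μ = (λ_1, …, λ_α, c+1, c^{β−2}, c−1, λ_{α+β+1}, …) be the partition obtained from λ by moving one box from the last row of the block of rows of length c to the first row of that block. Then K_{λ,ν} ≤ K_{μ,ν} for every partition ν of n; in particular λ ≤_I μ in the immersion poset. -/

import Mathlib

open Finset MvPolynomial

/-- A partition of `n`, represented as a weakly decreasing list of positive
integers summing to `n`. -/
def IsPartitionOf (n : ℕ) (l : List ℕ) : Prop :=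
  l.Pairwise (· ≥ ·) ∧ (∀ x ∈ l, 0 < x) ∧ l.sum = n

/-- `T : ℕ → ℕ → ℕ` is a semistandard Young tableau of shape `l`
(rows weakly increase, columns strictly increase, entries are `0` outside
of the diagram; entries are 0-indexed, so entry value `k` stands for the
letter `k+1`). -/
def IsSSYT (l : List ℕ) (T : ℕ → ℕ → ℕ) : Prop :=
  (∀ i j1 j2, j1 ≤ j2 → j2 < l.getD i 0 → T i j1 ≤ T i j2) ∧
  (∀ i1 i2 j, i1 < i2 → j < l.getD i2 0 → T i1 j < T i2 j) ∧
  (∀ i j, l.getD i 0 ≤ j → T i j = 0)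

/-- The tableau `T` of shape `l` has content `ν`: for every `k`, the number of
cells of the diagram of `l` whose entry is `k` equals the `(k+1)`-st part of `ν`. -/
def HasContent (l : List ℕ) (T : ℕ → ℕ → ℕ) (ν : List ℕ) : Prop :=
  ∀ k, Nat.card {c : ℕ × ℕ // c.2 < l.getD c.1 0 ∧ T c.1 c.2 = k} = ν.getD k 0

/-- The Kostka number `K_{l,ν}`: the number of semistandard Young tableaux of
shape `l` and content `ν`. -/
noncomputable def kostka (l ν : List ℕ) : ℕ :=
  Nat.card {T : ℕ → ℕ → ℕ // IsSSYT l T ∧ HasContent l T ν}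

/-- `f^λ`, the number of standard Young tableaux of shape `l`. -/
noncomputable def fSYT (l : List ℕ) : ℕ := kostka l (List.replicate l.sum 1)

/-- Dominance order: all partial sums of `l` are at most those of `m`. -/
def DomLE (l m : List ℕ) : Prop := ∀ k, (l.take k).sum ≤ (m.take k).sum

/-- The standard immersion order: dominance together with `f^λ ≤ f^μ`. -/
def StdLE (l m : List ℕ) : Prop := DomLE l m ∧ fSYT l ≤ fSYT m

/-- Strict standard immersion order. -/
def StdLT (l m : List ℕ) : Prop := StdLE l m ∧ l ≠ m

/-- `m` covers `l` in the standard immersion poset on partitions of `n`. -/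
def StdCovBy (n : ℕ) (l m : List ℕ) : Prop :=
  StdLT l m ∧ ∀ ν, IsPartitionOf n ν → StdLT l ν → ¬ StdLT ν m

/-- `l` is a maximal element of the standard immersion poset on partitions of `n`. -/
def StdMaximal (n : ℕ) (l : List ℕ) : Prop :=
  ∀ m, IsPartitionOf n m → m ≠ l → ¬ StdLE l m

/-- The immersion order on partitions of `n`: `l ≤_I m` iff
`K_{l,α} ≤ K_{m,α}` for every partition `α` of `n`. -/
def ImmersionLE (n : ℕ) (l m : List ℕ) : Prop :=
  ∀ ν, IsPartitionOf n ν → kostka l ν ≤ kostka m ν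

/-- Strict immersion order. -/
def ImmersionLT (n : ℕ) (l m : List ℕ) : Prop := ImmersionLE n l m ∧ l ≠ m

/-- `m` covers `l` in the immersion poset on partitions of `n`. -/
def ImmersionCovBy (n : ℕ) (l m : List ℕ) : Prop :=
  ImmersionLT n l m ∧ ∀ ν, IsPartitionOf n ν → ImmersionLT n l ν → ¬ ImmersionLT n ν m

/-- The partition `μ` obtained from `λ = pre ++ c^β ++ suf` by moving one box
from the last row of the block of rows of length `c` to the first row of that
block (the part `c - 1` is dropped when it equals zero). -/
def movedShape (c β : ℕ) (pre suf : List ℕ) : List ℕ :=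
  pre ++ (c + 1) :: (List.replicate (β - 2) c ++ ((c - 1) :: suf).filter (fun x => x ≠ 0))

/-!
A semistandard tableau is determined by the sets `C j` of the entries of its columns, and its rows
are weakly increasing iff `#{x ∈ C (j + 1) | x < z} ≤ #{x ∈ C j | x < z}` for all `j` and `z`.
In terms of columns, `μ` arises from `λ` by moving a box from a column with `α + β` boxes to the
next one, which has `α` boxes. Let `X` and `Y` be the entry sets of these two columns and let
`y + 1` be the first point at which the excess `#{x ∈ X | x < z} - #{x ∈ Y | x < z}`, as a function
of `z`, is maximal. Then `y ∈ X \ Y`, and we move `y` from `X` to `Y`. This lowers the excess by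
`2` beyond `y`. Hence `y` is the last point at which the new excess is maximal, so the move is
injective. Beyond `y`, at least `β` elements of `X` and at most `α ≤ β - 2` elements of `Y` have
been counted, so the new excess is still nonnegative, and the result is a tableau of shape `μ`.
-/

section Counting

variable {X Y : Finset ℕ} {z : ℕ}

lemma count_mem_le_card (X : Finset ℕ) (z : ℕ) : Nat.count (· ∈ X) z ≤ #X := by
  rw [Nat.count_eq_card_filter_range]
  exact card_le_card fun x hx => (mem_filter.1 hx).2

lemma count_mem_eq_card (hX : ∀ x ∈ X, x < z) : Nat.count (· ∈ X) z = #X := by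
  rw [Nat.count_eq_card_filter_range]
  congr 1
  ext x
  simpa using hX x

lemma count_mem_mono (h : X ⊆ Y) (z : ℕ) : Nat.count (· ∈ X) z ≤ Nat.count (· ∈ Y) z :=
  Nat.count_mono_left fun _ _ hx => h hx

lemma card_toFinset_mem (hf : (Set.ofPred (· ∈ X)).Finite) : #hf.toFinset = #X := by
  congr 1
  ext
  simp

lemma lt_card_toFinset_mem {i : ℕ} (hi : i < #X) :
    ∀ hf : (Set.ofPred (· ∈ X)).Finite, i < #hf.toFinset :=
  fun hf => hi.trans_eq (card_toFinset_mem hf).symm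

lemma nth_mem_of_card_le {i : ℕ} (hi : #X ≤ i) : Nat.nth (· ∈ X) i = 0 :=
  Nat.nth_of_card_le X.finite_toSet (by rwa [card_toFinset_mem])

lemma image_range_nth_mem (X : Finset ℕ) : (range #X).image (Nat.nth (· ∈ X)) = X := by
  have himage := Nat.image_nth_Iio_card (p := (· ∈ X)) X.finite_toSet
  rw [card_toFinset_mem] at himage
  apply Finset.coe_injective
  rw [coe_image, coe_range, himage]
  rfl

lemma nth_mem_image_range {f : ℕ → ℕ} {n i : ℕ} (hf : StrictMonoOn f (Set.Iio n)) (hi : i < n) :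
    Nat.nth (· ∈ (range n).image f) i = f i := by
  have hdomain : {i | ∀ h : (Set.ofPred (· ∈ (range n).image f)).Finite, i < #h.toFinset}
      = Set.Iio n := by
    ext i
    have hfin : (Set.ofPred (· ∈ (range n).image f)).Finite :=
      ((range n).image f).finite_toSet
    simp only [Set.mem_ofPred_eq, Set.mem_Iio, card_toFinset_mem]
    rw [card_image_of_injOn (by simpa using hf.injOn), card_range]
    exact ⟨fun h => h hfin, fun h _ => h⟩
  refine (Nat.eq_nth_of_strictMonoOn_of_mapsTo_of_surjOn f ?_ ?_ ?_ ?_).symm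
  all_goals rw [hdomain]
  · rintro x hx
    simpa using hx
  · rintro x hx
    exact mem_image_of_mem f (mem_range.2 hx)
  · exact hf
  · exact hi

lemma forall_count_mem_le_iff_forall_nth_mem_le :
    (∀ z, Nat.count (· ∈ Y) z ≤ Nat.count (· ∈ X) z) ↔
      ∀ i < #Y, i < #X ∧ Nat.nth (· ∈ X) i ≤ Nat.nth (· ∈ Y) i := by
  constructor
  · intro h i hi
    have hcount : i < Nat.count (· ∈ X) (Nat.nth (· ∈ Y) i + 1) := by
      have := Nat.count_nth_succ (lt_card_toFinset_mem hi)
      have := h (Nat.nth (· ∈ Y) i + 1)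
      omega
    exact ⟨hcount.trans_le (count_mem_le_card X _),
      Nat.lt_succ_iff.1 (Nat.nth_lt_of_lt_count hcount)⟩
  · intro h z
    by_contra! hlt
    obtain ⟨hX, hle⟩ := h _ (hlt.trans_le (count_mem_le_card Y z))
    have hz : Nat.nth (· ∈ X) (Nat.count (· ∈ X) z) < z :=
      hle.trans_lt (Nat.nth_lt_of_lt_count hlt)
    have := Nat.count_strict_mono (Nat.nth_mem _ (lt_card_toFinset_mem hX)) hz
    rw [Nat.count_nth (lt_card_toFinset_mem hX)] at this
    omega

end Counting

section Excess

/-- The excess of `X` over `Y` below `z`: how many more elements less than `z` the column `X` has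
than the column `Y`. -/
def excess (X Y : Finset ℕ) (z : ℕ) : ℤ := Nat.count (· ∈ X) z - Nat.count (· ∈ Y) z

/-- The entry `y` is the pivot of the pair of columns `X`, `Y` if `y + 1` is the first point at
which the excess of `X` over `Y` attains its maximum. This is the entry which gets moved
from `X` to `Y`. -/
structure IsPivot (X Y : Finset ℕ) (y : ℕ) : Prop where
  excess_le : ∀ z, excess X Y z ≤ excess X Y (y + 1)
  excess_lt : ∀ z ≤ y, excess X Y z < excess X Y (y + 1)

variable {X Y X' Y' : Finset ℕ} {y y' z : ℕ}

lemma excess_zero (X Y : Finset ℕ) : excess X Y 0 = 0 := by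
  simp [excess]

lemma excess_succ (X Y : Finset ℕ) (z : ℕ) :
    excess X Y (z + 1)
      = excess X Y z + (if z ∈ X then 1 else 0) - (if z ∈ Y then 1 else 0) := by
  simp only [excess, Nat.count_succ]
  push_cast
  ring

lemma excess_le_card (X Y : Finset ℕ) (z : ℕ) : excess X Y z ≤ #X := by
  have := count_mem_le_card X z
  simp only [excess]
  omega

lemma exists_excess_eq_card_sub_card (X Y : Finset ℕ) : ∃ z, excess X Y z = #X - #Y := by
  have hlt : ∀ x ∈ X ∪ Y, x < (X ∪ Y).sup id + 1 := fun x hx =>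
    Nat.lt_succ_of_le (le_sup (f := id) hx)
  refine ⟨(X ∪ Y).sup id + 1, ?_⟩
  rw [excess, count_mem_eq_card fun x hx => hlt x (mem_union_left Y hx),
    count_mem_eq_card fun x hx => hlt x (mem_union_right X hx)]

lemma excess_erase_insert (hX : y ∈ X) (hY : y ∉ Y) (z : ℕ) :
    excess (X.erase y) (insert y Y) z = excess X Y z - if y < z then 2 else 0 := by
  induction z with
  | zero => simp [excess_zero]
  | succ z ih => grind [excess_succ]

lemma exists_isPivot (h : #Y < #X) : ∃ y, IsPivot X Y y := by
  classical
  have hbdd : BddAbove (Set.range (excess X Y)) := ⟨#X, by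
    rintro _ ⟨z, rfl⟩
    exact excess_le_card X Y z⟩
  have hmax : ∃ z, ∀ w, excess X Y w ≤ excess X Y z := by
    obtain ⟨z, hz⟩ := Int.csSup_mem (Set.range_nonempty _) hbdd
    exact ⟨z, fun w => hz ▸ le_csSup hbdd ⟨w, rfl⟩⟩
  have hpos : Nat.find hmax ≠ 0 := by
    intro hzero
    obtain ⟨z, hz⟩ := exists_excess_eq_card_sub_card X Y
    have := Nat.find_spec hmax z
    rw [hzero, excess_zero] at this
    omega
  obtain ⟨y, hy⟩ := Nat.exists_eq_succ_of_ne_zero hpos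
  have hle : ∀ w, excess X Y w ≤ excess X Y (y + 1) := by
    simpa only [hy] using Nat.find_spec hmax
  refine ⟨y, hle, fun z hz => ?_⟩
  obtain ⟨w, hw⟩ := not_forall.1 (Nat.find_min hmax (m := z) (by omega))
  exact (not_le.1 hw).trans_le (hle w)

namespace IsPivot

lemma mem_and_notMem (h : IsPivot X Y y) : y ∈ X ∧ y ∉ Y := by
  have := h.excess_lt y le_rfl
  rw [excess_succ] at this
  split_ifs at this <;> grind

lemma mem (h : IsPivot X Y y) : y ∈ X := h.mem_and_notMem.1

lemma notMem (h : IsPivot X Y y) : y ∉ Y := h.mem_and_notMem.2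

lemma card_sub_card_le (h : IsPivot X Y y) : (#X : ℤ) - #Y ≤ excess X Y (y + 1) := by
  obtain ⟨z, hz⟩ := exists_excess_eq_card_sub_card X Y
  exact hz ▸ h.excess_le z

lemma excess_erase_insert_of_lt (h : IsPivot X Y y) (hz : y < z) :
    excess (X.erase y) (insert y Y) z < excess (X.erase y) (insert y Y) y := by
  have hmax := h.excess_le z
  have hstep := excess_succ X Y y
  rw [if_pos h.mem, if_neg h.notMem] at hstep
  rw [excess_erase_insert h.mem h.notMem, excess_erase_insert h.mem h.notMem, if_pos hz,
    if_neg (lt_irrefl y)]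
  omega

lemma excess_erase_insert_of_le (h : IsPivot X Y y) (hz : z ≤ y) :
    excess (X.erase y) (insert y Y) z ≤ excess (X.erase y) (insert y Y) y := by
  have hmax := h.excess_lt z hz
  have hstep := excess_succ X Y y
  rw [if_pos h.mem, if_neg h.notMem] at hstep
  rw [excess_erase_insert h.mem h.notMem, excess_erase_insert h.mem h.notMem,
    if_neg hz.not_gt, if_neg (lt_irrefl y)]
  omega

lemma le_of_erase_eq_of_insert_eq (h : IsPivot X Y y) (h' : IsPivot X' Y' y')
    (hX : X.erase y = X'.erase y') (hY : insert y Y = insert y' Y') : y' ≤ y := by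
  by_contra! hlt
  have hgt := h.excess_erase_insert_of_lt hlt
  rw [hX, hY] at hgt
  exact (h'.excess_erase_insert_of_le hlt.le).not_gt hgt

lemma eq_of_erase_eq_of_insert_eq (h : IsPivot X Y y) (h' : IsPivot X' Y' y')
    (hX : X.erase y = X'.erase y') (hY : insert y Y = insert y' Y') : y = y' :=
  (h'.le_of_erase_eq_of_insert_eq h hX.symm hY.symm).antisymm
    (h.le_of_erase_eq_of_insert_eq h' hX hY)

lemma count_insert_le_count_erase (h : IsPivot X Y y) (hcard : 2 * #Y + 2 ≤ #X)
    (hexcess : ∀ z, 0 ≤ excess X Y z) (z : ℕ) :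
    Nat.count (· ∈ insert y Y) z ≤ Nat.count (· ∈ X.erase y) z := by
  suffices 0 ≤ excess (X.erase y) (insert y Y) z by
    simp only [excess] at this
    omega
  rw [excess_erase_insert h.mem h.notMem]
  split_ifs with hz
  · have hX : Nat.count (· ∈ X) (y + 1) ≤ Nat.count (· ∈ X) z := Nat.count_monotone _ hz
    have hY := count_mem_le_card Y z
    have := h.card_sub_card_le
    simp only [excess] at this ⊢
    omega
  · simpa using hexcess z

end IsPivot

end Excess

section ColumnTableau

/-- A semistandard Young tableau with column lengths `h` and content `ν`, encoded by the family `C`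
of the entry sets of its columns. Columns are automatically strictly increasing in this encoding,
and the condition `count_succ_le` says that rows are weakly increasing. -/
structure IsColumnTableau (h : ℕ → ℕ) (ν : List ℕ) (C : ℕ → Finset ℕ) : Prop where
  card_eq : ∀ j, #(C j) = h j
  count_succ_le : ∀ j z, Nat.count (· ∈ C (j + 1)) z ≤ Nat.count (· ∈ C j) z
  content : ∀ k, Nat.card {j // k ∈ C j} = ν.getD k 0

/-- The column lengths after moving one box from column `p` to column `p + 1`
(to be used for `0 < h p`, as the subtraction is truncated). -/
def moveBox (h : ℕ → ℕ) (p : ℕ) : ℕ → ℕ :=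
  Function.update (Function.update h p (h p - 1)) (p + 1) (h (p + 1) + 1)

/-- Move the entry `y` from column `p` to column `p + 1`. -/
def moveEntry (C : ℕ → Finset ℕ) (p y : ℕ) : ℕ → Finset ℕ :=
  Function.update (Function.update C p ((C p).erase y)) (p + 1) (insert y (C (p + 1)))

variable {h : ℕ → ℕ} {ν : List ℕ} {C D : ℕ → Finset ℕ} {p y y' : ℕ}

lemma moveEntry_apply_self : moveEntry C p y p = (C p).erase y := by
  simp [moveEntry]

lemma moveEntry_apply_succ : moveEntry C p y (p + 1) = insert y (C (p + 1)) := by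
  simp [moveEntry]

lemma moveEntry_apply_of_ne {j : ℕ} (hj : j ≠ p) (hj' : j ≠ p + 1) : moveEntry C p y j = C j := by
  simp [moveEntry, hj, hj']

lemma moveEntry_subset {j : ℕ} (hj : j ≠ p + 1) : moveEntry C p y j ⊆ C j := by
  by_cases hp : j = p
  · rw [hp, moveEntry_apply_self]
    exact erase_subset y _
  · rw [moveEntry_apply_of_ne hp hj]

lemma subset_moveEntry {j : ℕ} (hj : j ≠ p) : C j ⊆ moveEntry C p y j := by
  by_cases hp : j = p + 1
  · rw [hp, moveEntry_apply_succ]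
    exact subset_insert y _
  · rw [moveEntry_apply_of_ne hj hp]

lemma mem_moveEntry_iff_of_ne {k : ℕ} (hk : k ≠ y) (j : ℕ) :
    k ∈ moveEntry C p y j ↔ k ∈ C j := by
  by_cases hsucc : j = p + 1
  · simp [hsucc, moveEntry_apply_succ, hk]
  by_cases hself : j = p
  · simp [hself, moveEntry_apply_self, hk]
  · rw [moveEntry_apply_of_ne hself hsucc]

lemma self_mem_moveEntry_iff (hmem : y ∈ C p) (hnotMem : y ∉ C (p + 1)) (j : ℕ) :
    y ∈ moveEntry C p y j ↔ y ∈ C (Equiv.swap p (p + 1) j) := by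
  by_cases hsucc : j = p + 1
  · simp [hsucc, moveEntry_apply_succ, hmem]
  by_cases hself : j = p
  · simp [hself, moveEntry_apply_self, hnotMem]
  · rw [moveEntry_apply_of_ne hself hsucc, Equiv.swap_apply_of_ne_of_ne hself hsucc]

lemma card_moveEntry (hmem : y ∈ C p) (hnotMem : y ∉ C (p + 1)) (j : ℕ) :
    #(moveEntry C p y j) = moveBox (fun j => #(C j)) p j := by
  by_cases hsucc : j = p + 1
  · simp [hsucc, moveEntry, moveBox, hnotMem]
  by_cases hself : j = p
  · simp [hself, moveEntry, moveBox, hmem]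
  · simp [moveEntry, moveBox, hself, hsucc]

lemma natCard_mem_moveEntry (hmem : y ∈ C p) (hnotMem : y ∉ C (p + 1)) (k : ℕ) :
    Nat.card {j // k ∈ moveEntry C p y j} = Nat.card {j // k ∈ C j} := by
  by_cases hk : k = y
  · subst hk
    exact Nat.card_congr
      ((Equiv.swap p (p + 1)).subtypeEquiv (self_mem_moveEntry_iff hmem hnotMem))
  · exact Nat.card_congr (Equiv.subtypeEquivRight (mem_moveEntry_iff_of_ne hk))

lemma moveEntry_injective (hC : IsPivot (C p) (C (p + 1)) y) (hD : IsPivot (D p) (D (p + 1)) y')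
    (hCD : moveEntry C p y = moveEntry D p y') : C = D := by
  have hself := congrFun hCD p
  have hsucc := congrFun hCD (p + 1)
  simp only [moveEntry_apply_self, moveEntry_apply_succ] at hself hsucc
  obtain rfl := hC.eq_of_erase_eq_of_insert_eq hD hself hsucc
  funext j
  by_cases hjself : j = p
  · rw [hjself, ← insert_erase hC.mem, hself, insert_erase hD.mem]
  by_cases hjsucc : j = p + 1
  · rw [hjsucc, ← erase_insert hC.notMem, hsucc, erase_insert hD.notMem]
  · simpa [moveEntry_apply_of_ne hjself hjsucc] using congrFun hCD j

namespace IsColumnTableau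

lemma excess_nonneg (hC : IsColumnTableau h ν C) (j z : ℕ) : 0 ≤ excess (C j) (C (j + 1)) z := by
  have := hC.count_succ_le j z
  simp only [excess]
  omega

lemma lt_length_of_mem (hC : IsColumnTableau h ν C) {N : ℕ} (hN : ∀ j, N ≤ j → h j = 0) {j k : ℕ}
    (hk : k ∈ C j) : k < ν.length := by
  have hfin : Finite {j // k ∈ C j} := by
    refine Set.Finite.subset (Set.finite_Iio N) fun i hi => ?_
    by_contra hNi
    have := hC.card_eq i
    rw [hN i (not_lt.1 hNi), card_eq_zero] at this
    exact notMem_empty k (this ▸ hi)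
  by_contra! hlen
  have := hC.content k
  rw [List.getD_eq_default _ _ hlen, Finite.card_eq_zero_iff] at this
  exact this.false ⟨j, hk⟩

end IsColumnTableau

lemma finite_columnTableau {N : ℕ} (hN : ∀ j, N ≤ j → h j = 0) (ν : List ℕ) :
    Finite {C // IsColumnTableau h ν C} := by
  refine Finite.of_injective (fun C (j : Fin N) =>
    (⟨C.1 j, mem_powerset.2 fun k hk => mem_range.2 (C.2.lt_length_of_mem hN hk)⟩ :
      (range ν.length).powerset)) fun C D hCD => Subtype.ext <| funext fun j => ?_
  rcases lt_or_ge j N with hj | hj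
  · exact congrArg Subtype.val (congrFun hCD ⟨j, hj⟩)
  · have hCj := C.2.card_eq j
    have hDj := D.2.card_eq j
    rw [hN j hj, card_eq_zero] at hCj hDj
    rw [hCj, hDj]

lemma isColumnTableau_moveEntry (hC : IsColumnTableau h ν C) (hp : 2 * h (p + 1) + 2 ≤ h p)
    (hy : IsPivot (C p) (C (p + 1)) y) : IsColumnTableau (moveBox h p) ν (moveEntry C p y) where
  card_eq j := by
    rw [card_moveEntry hy.mem hy.notMem, funext hC.card_eq]
  count_succ_le j z := by
    by_cases hj : j = p
    · rw [hj, moveEntry_apply_self, moveEntry_apply_succ]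
      exact hy.count_insert_le_count_erase (by simpa only [hC.card_eq] using hp)
        (hC.excess_nonneg p) z
    · calc Nat.count (· ∈ moveEntry C p y (j + 1)) z
          ≤ Nat.count (· ∈ C (j + 1)) z := count_mem_mono (moveEntry_subset (by omega)) z
        _ ≤ Nat.count (· ∈ C j) z := hC.count_succ_le j z
        _ ≤ Nat.count (· ∈ moveEntry C p y j) z := count_mem_mono (subset_moveEntry hj) z
  content k := by
    rw [natCard_mem_moveEntry hy.mem hy.notMem, hC.content]

lemma natCard_columnTableau_le_moveBox [Finite {C // IsColumnTableau (moveBox h p) ν C}]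
    (hp : 2 * h (p + 1) + 2 ≤ h p) :
    Nat.card {C // IsColumnTableau h ν C} ≤ Nat.card {C // IsColumnTableau (moveBox h p) ν C} := by
  have hpivot : ∀ C : {C // IsColumnTableau h ν C}, ∃ y, IsPivot (C.1 p) (C.1 (p + 1)) y :=
    fun C => exists_isPivot (by rw [C.2.card_eq, C.2.card_eq]; omega)
  choose y hy using hpivot
  exact Nat.card_le_card_of_injective
    (fun C => (⟨moveEntry C.1 p (y C), isColumnTableau_moveEntry C.2 hp (hy C)⟩ :
      {C // IsColumnTableau (moveBox h p) ν C}))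
    fun C D hCD => Subtype.ext (moveEntry_injective (hy C) (hy D) (congrArg Subtype.val hCD))

end ColumnTableau

section ColHeight

/-- The length of the `j`-th column of the Young diagram of `l`, i.e. the `(j + 1)`-st part of the
conjugate partition. -/
def colHeight (l : List ℕ) (j : ℕ) : ℕ := l.countP (j < ·)

variable {l : List ℕ} {j : ℕ}

lemma colHeight_cons (a : ℕ) (l : List ℕ) (j : ℕ) :
    colHeight (a :: l) j = (if j < a then 1 else 0) + colHeight l j := by
  simp [colHeight, List.countP_cons, add_comm]

lemma colHeight_append (l m : List ℕ) (j : ℕ) :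
    colHeight (l ++ m) j = colHeight l j + colHeight m j :=
  List.countP_append

lemma colHeight_replicate (β c j : ℕ) :
    colHeight (List.replicate β c) j = if j < c then β else 0 := by
  simp [colHeight, List.countP_replicate]

lemma colHeight_eq_length (hl : ∀ x ∈ l, j < x) : colHeight l j = l.length :=
  List.countP_eq_length.2 fun x hx => by simpa using hl x hx

lemma colHeight_eq_zero (hl : ∀ x ∈ l, x ≤ j) : colHeight l j = 0 :=
  List.countP_eq_zero.2 fun x hx => by simpa using hl x hx

lemma lt_getD_iff_lt_colHeight (hl : l.Pairwise (· ≥ ·)) (i j : ℕ) :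
    j < l.getD i 0 ↔ i < colHeight l j := by
  induction l generalizing i with
  | nil => simp [colHeight]
  | cons a l ih =>
    obtain ⟨ha, hl⟩ := List.pairwise_cons.1 hl
    by_cases hja : j < a
    · cases i with
      | zero => simp [colHeight, hja]
      | succ i => simpa [colHeight, hja] using ih hl i
    · have hzero : colHeight l j = 0 :=
        colHeight_eq_zero fun x hx => (ha x hx).trans (not_lt.1 hja)
      cases i with
      | zero => simp [colHeight_cons, hja, hzero]
      | succ i => rw [List.getD_cons_succ, ih hl, colHeight_cons, if_neg hja, hzero]; simp

end ColHeight

section Tableau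

/-- The set of entries of the `j`-th column of a tableau `T` of shape `l`. -/
def columnSet (l : List ℕ) (T : ℕ → ℕ → ℕ) (j : ℕ) : Finset ℕ :=
  (range (colHeight l j)).image (T · j)

/-- The tableau whose `j`-th column lists the elements of `C j` in increasing order. It relies on
the convention that `Nat.nth` is `0` beyond the number of elements, as `IsSSYT` requires outside of
the diagram. -/
noncomputable def tableauOfColumns (C : ℕ → Finset ℕ) (i j : ℕ) : ℕ := Nat.nth (· ∈ C j) i

variable {l ν : List ℕ} {T : ℕ → ℕ → ℕ} {C : ℕ → Finset ℕ}

lemma strictMonoOn_column (hl : l.Pairwise (· ≥ ·)) (hT : IsSSYT l T) (j : ℕ) :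
    StrictMonoOn (T · j) (Set.Iio (colHeight l j)) := fun _ _ i hi hlt =>
  hT.2.1 _ i j hlt ((lt_getD_iff_lt_colHeight hl i j).2 hi)

lemma card_columnSet (hl : l.Pairwise (· ≥ ·)) (hT : IsSSYT l T) (j : ℕ) :
    #(columnSet l T j) = colHeight l j := by
  rw [columnSet, card_image_of_injOn (by simpa using (strictMonoOn_column hl hT j).injOn),
    card_range]

lemma tableauOfColumns_columnSet (hl : l.Pairwise (· ≥ ·)) (hT : IsSSYT l T) :
    tableauOfColumns (columnSet l T) = T := by
  funext i j
  rcases lt_or_ge i (colHeight l j) with hi | hi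
  · exact nth_mem_image_range (strictMonoOn_column hl hT j) hi
  · rw [tableauOfColumns, nth_mem_of_card_le (by rwa [card_columnSet hl hT]),
      hT.2.2 i j (not_lt.1 fun h => hi.not_gt ((lt_getD_iff_lt_colHeight hl i j).1 h))]

lemma columnSet_tableauOfColumns (hC : IsColumnTableau (colHeight l) ν C) :
    columnSet l (tableauOfColumns C) = C := by
  funext j
  rw [columnSet, ← hC.card_eq]
  exact image_range_nth_mem (C j)

lemma natCard_cell_eq_natCard_column (hl : l.Pairwise (· ≥ ·)) (hT : IsSSYT l T) (k : ℕ) :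
    Nat.card {c : ℕ × ℕ // c.2 < l.getD c.1 0 ∧ T c.1 c.2 = k}
      = Nat.card {j // k ∈ columnSet l T j} := by
  have hcell (i j : ℕ) : j < l.getD i 0 ↔ i < colHeight l j := lt_getD_iff_lt_colHeight hl i j
  refine Nat.card_eq_of_bijective (fun c => ⟨c.1.2, mem_image.2
    ⟨c.1.1, mem_range.2 ((hcell _ _).1 c.2.1), c.2.2⟩⟩) ⟨?_, ?_⟩
  · rintro ⟨⟨i, j⟩, hi, hik⟩ ⟨⟨i', j'⟩, hi', hik'⟩ hjj'
    obtain rfl : j = j' := congrArg Subtype.val hjj'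
    obtain rfl : i = i' := (strictMonoOn_column hl hT j).injOn ((hcell i j).1 hi)
      ((hcell i' j).1 hi') (hik.trans hik'.symm)
    rfl
  · rintro ⟨j, hj⟩
    obtain ⟨i, hi, hik⟩ := mem_image.1 hj
    exact ⟨⟨(i, j), (hcell i j).2 (mem_range.1 hi), hik⟩, rfl⟩

lemma isColumnTableau_columnSet (hl : l.Pairwise (· ≥ ·)) (hT : IsSSYT l T)
    (hν : HasContent l T ν) : IsColumnTableau (colHeight l) ν (columnSet l T) where
  card_eq := card_columnSet hl hT
  count_succ_le j := by
    have hentry (i j : ℕ) : Nat.nth (· ∈ columnSet l T j) i = T i j :=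
      congrFun₂ (tableauOfColumns_columnSet hl hT) i j
    rw [forall_count_mem_le_iff_forall_nth_mem_le]
    intro i hi
    rw [card_columnSet hl hT, ← lt_getD_iff_lt_colHeight hl] at hi
    rw [card_columnSet hl hT, ← lt_getD_iff_lt_colHeight hl, hentry, hentry]
    exact ⟨by omega, hT.1 i j (j + 1) j.le_succ hi⟩
  content k := (natCard_cell_eq_natCard_column hl hT k).symm.trans (hν k)

lemma isSSYT_tableauOfColumns (hl : l.Pairwise (· ≥ ·)) (hC : IsColumnTableau (colHeight l) ν C) :
    IsSSYT l (tableauOfColumns C) := by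
  have hcell (i j : ℕ) : j < l.getD i 0 ↔ i < #(C j) := by
    rw [lt_getD_iff_lt_colHeight hl, hC.card_eq]
  have hcount (z : ℕ) : Antitone fun j => Nat.count (· ∈ C j) z :=
    antitone_nat_of_succ_le fun j => hC.count_succ_le j z
  refine ⟨fun i j₁ j₂ hj hi => ?_, fun i₁ i₂ j hlt hi => ?_, fun i j hi => ?_⟩
  · exact (forall_count_mem_le_iff_forall_nth_mem_le.1 (fun z => hcount z hj) i
      ((hcell i j₂).1 hi)).2
  · exact Nat.nth_lt_nth' hlt (lt_card_toFinset_mem ((hcell i₂ j).1 hi))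
  · exact nth_mem_of_card_le (not_lt.1 fun h => hi.not_gt ((hcell i j).2 h))

lemma hasContent_tableauOfColumns (hl : l.Pairwise (· ≥ ·))
    (hC : IsColumnTableau (colHeight l) ν C) : HasContent l (tableauOfColumns C) ν := fun k => by
  rw [natCard_cell_eq_natCard_column hl (isSSYT_tableauOfColumns hl hC),
    columnSet_tableauOfColumns hC, hC.content]

lemma kostka_eq_natCard_columnTableau (hl : l.Pairwise (· ≥ ·)) (ν : List ℕ) :
    kostka l ν = Nat.card {C // IsColumnTableau (colHeight l) ν C} :=
  Nat.card_congr
    { toFun := fun T => ⟨columnSet l T, isColumnTableau_columnSet hl T.2.1 T.2.2⟩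
      invFun := fun C => ⟨tableauOfColumns C,
        isSSYT_tableauOfColumns hl C.2, hasContent_tableauOfColumns hl C.2⟩
      left_inv := fun T => Subtype.ext (tableauOfColumns_columnSet hl T.2.1)
      right_inv := fun C => Subtype.ext (columnSet_tableauOfColumns C.2) }

lemma kostka_le_of_colHeight_eq_moveBox {m : List ℕ} {p : ℕ} (hl : l.Pairwise (· ≥ ·))
    (hm : m.Pairwise (· ≥ ·)) (hlm : colHeight m = moveBox (colHeight l) p)
    (hp : 2 * colHeight l (p + 1) + 2 ≤ colHeight l p) (ν : List ℕ) :
    kostka l ν ≤ kostka m ν := by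
  rw [kostka_eq_natCard_columnTableau hl, kostka_eq_natCard_columnTableau hm, hlm]
  have : Finite {C // IsColumnTableau (moveBox (colHeight l) p) ν C} :=
    hlm ▸ finite_columnTableau (N := m.sum)
      (fun _ hj => colHeight_eq_zero fun _ hx => (List.le_sum_of_mem hx).trans hj) ν
  exact natCard_columnTableau_le_moveBox hp

end Tableau

section MovedShape

variable {c β : ℕ} {pre suf : List ℕ}

lemma colHeight_append_replicate_append (c β : ℕ) (pre suf : List ℕ) (j : ℕ) :
    colHeight (pre ++ List.replicate β c ++ suf) j
      = colHeight pre j + (if j < c then β else 0) + colHeight suf j := by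
  rw [colHeight_append, colHeight_append, colHeight_replicate]

lemma colHeight_movedShape (c β : ℕ) (pre suf : List ℕ) (j : ℕ) :
    colHeight (movedShape c β pre suf) j
      = colHeight pre j + (if j < c + 1 then 1 else 0) + (if j < c then β - 2 else 0)
        + (if j < c - 1 then 1 else 0) + colHeight suf j := by
  have hfilter (l : List ℕ) : colHeight (l.filter (fun x => x ≠ 0)) j = colHeight l j := by
    rw [colHeight, List.countP_filter]
    refine List.countP_congr fun x _ => ?_
    simp only [Bool.and_eq_true, decide_eq_true_eq]
    omega
  rw [movedShape, colHeight_append, colHeight_cons, colHeight_append, colHeight_replicate, hfilter,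
    colHeight_cons]
  ring

lemma colHeight_movedShape_eq_moveBox (hc : 1 ≤ c) (hβ : 2 ≤ β) :
    colHeight (movedShape c β pre suf)
      = moveBox (colHeight (pre ++ List.replicate β c ++ suf)) (c - 1) := by
  obtain ⟨p, rfl⟩ := Nat.exists_eq_add_of_le' hc
  funext j
  simp only [moveBox, Function.update_apply, colHeight_append_replicate_append,
    colHeight_movedShape]
  split_ifs <;> grind

lemma pairwise_ge_append {l m : List ℕ} {a : ℕ} (hl : l.Pairwise (· ≥ ·))
    (hm : m.Pairwise (· ≥ ·)) (hal : ∀ x ∈ l, a ≤ x) (hma : ∀ x ∈ m, x ≤ a) :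
    (l ++ m).Pairwise (· ≥ ·) :=
  List.pairwise_append.2 ⟨hl, hm, fun x hx y hy => (hma y hy).trans (hal x hx)⟩

lemma pairwise_movedShape (hpre : ∀ x ∈ pre, c < x) (hsuf : ∀ x ∈ suf, x < c)
    (hl : (pre ++ List.replicate β c ++ suf).Pairwise (· ≥ ·)) :
    (movedShape c β pre suf).Pairwise (· ≥ ·) := by
  obtain ⟨hpre_block, hsuf_sorted, -⟩ := List.pairwise_append.1 hl
  obtain ⟨hpre_sorted, -, -⟩ := List.pairwise_append.1 hpre_block
  have htail : ((c - 1) :: suf).Pairwise (· ≥ ·) :=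
    List.pairwise_cons.2 ⟨fun x hx => Nat.le_sub_one_of_lt (hsuf x hx), hsuf_sorted⟩
  have htail_le : ∀ x ∈ (c - 1) :: suf, x ≤ c :=
    List.forall_mem_cons.2 ⟨c.sub_le 1, fun x hx => (hsuf x hx).le⟩
  have hblock := pairwise_ge_append (List.pairwise_replicate.2 (.inr le_rfl))
    (htail.filter (fun x => x ≠ 0)) (fun x hx => (List.eq_of_mem_replicate (n := β - 2) hx).ge)
    fun x hx => htail_le x (List.mem_of_mem_filter hx)
  have hblock_le := List.forall_mem_append.2
    ⟨fun x hx => (List.eq_of_mem_replicate (n := β - 2) hx).le.trans c.le_succ,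
      fun x hx => (htail_le x (List.mem_of_mem_filter (p := fun x => x ≠ 0) hx)).trans c.le_succ⟩
  exact pairwise_ge_append hpre_sorted (List.pairwise_cons.2 ⟨hblock_le, hblock⟩) hpre
    (List.forall_mem_cons.2 ⟨le_rfl, hblock_le⟩)

theorem kostka_le_of_moved_box_zero_general (hc : 1 ≤ c) (hβ : pre.length + 2 ≤ β)
    (hpre : ∀ x ∈ pre, c < x) (hsuf : ∀ x ∈ suf, x < c)
    (hl : (pre ++ List.replicate β c ++ suf).Pairwise (· ≥ ·)) (ν : List ℕ) :
    kostka (pre ++ List.replicate β c ++ suf) ν ≤ kostka (movedShape c β pre suf) ν := by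
  have hcol : colHeight (pre ++ List.replicate β c ++ suf) c = pre.length := by
    rw [colHeight_append_replicate_append, colHeight_eq_length hpre,
      colHeight_eq_zero fun x hx => (hsuf x hx).le, if_neg (lt_irrefl c), add_zero, add_zero]
  have hcol' : colHeight (pre ++ List.replicate β c ++ suf) (c - 1) = pre.length + β := by
    rw [colHeight_append_replicate_append,
      colHeight_eq_length fun x hx => (c.sub_le 1).trans_lt (hpre x hx),
      colHeight_eq_zero fun x hx => Nat.le_sub_one_of_lt (hsuf x hx), if_pos (by omega), add_zero]
  refine kostka_le_of_colHeight_eq_moveBox hl (pairwise_movedShape hpre hsuf hl)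
    (colHeight_movedShape_eq_moveBox hc (by omega)) ?_ ν
  rw [Nat.sub_add_cancel hc, hcol, hcol']
  omega

end MovedShape

/-- For `λ = (pre, c^β, suf)` with `β ≥ α + 2` (where `α` is the
number of parts of `pre`, all parts of `pre` exceed `c`, and all parts of `suf`
are less than `c`), and `μ` obtained by moving a box from the last row of the
block of `c`'s to its first row, we have `K_{λ,ν} ≤ K_{μ,ν}` for every partition
`ν` of `n`; in particular `λ ≤_I μ`. -/
theorem kostka_le_of_moved_box_zero (n c α β : ℕ) (pre suf : List ℕ) (hc : 1 ≤ c)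
    (hα : pre.length = α) (hβ : α + 2 ≤ β)
    (hpre : ∀ x ∈ pre, c < x) (hsuf : ∀ x ∈ suf, x < c)
    (hlam : IsPartitionOf n (pre ++ List.replicate β c ++ suf)) :
    (∀ ν, IsPartitionOf n ν →
        kostka (pre ++ List.replicate β c ++ suf) ν ≤ kostka (movedShape c β pre suf) ν) ∧
      ImmersionLE n (pre ++ List.replicate β c ++ suf) (movedShape c β pre suf) :=
  have hle := kostka_le_of_moved_box_zero_general hc (hα ▸ hβ) hpre hsuf hlam.1
  ⟨fun ν _ => hle ν, fun ν _ => hle ν⟩
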